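/- Pointwise value gap inequality: under the hypotheses of the performance degradation setting (π_S is L_TV-Lipschitz in total variation, dist(Ψ(s), h(s)) ≤ ε for all s, V₁ and V₂ are the bounded fixed points of 𝒯^{π_Ψ} and 𝒯^{π_{S∘h}} respectively, and the action-values of V₂ are bounded by Q_max), for every target state s ∈ S_T one has |V₁(s) − V₂(s)| ≤ γ · ‖V₁ − V₂‖_∞ + 2 · L_TV · Q_max · ε. -/

import Mathlib

/-!
Let `Qᵢ s a = R s a + γ · 𝔼_{T s a} Vᵢ`, and let `p = π_S (Ψ s)`, `q = π_S (h s)`. The fixed-point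
equations say `V₁ s = 𝔼_p Q₁` and `V₂ s = 𝔼_q Q₂`, so

  `V₁ s - V₂ s = 𝔼_p (Q₁ - Q₂) + (𝔼_p Q₂ - 𝔼_q Q₂)`.

Since `Q₁ - Q₂ = γ · 𝔼_T (V₁ - V₂)`, the first term is at most `γ ‖V₁ - V₂‖_∞`
(`abs_tsum_pmf_mul_le`, used for `T` and then for `p`). The second is at most
`2 · D_TV(p, q) · Q_max` (`abs_tsum_pmf_mul_sub_le`), which the Lipschitz hypothesis controls.
Boundedness of the functions involved makes every series absolutely convergent, so that the sums may
be split.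
-/

/-- The Bellman evaluation operator for a discounted MDP. -/
noncomputable def bellman {S A : Type*} (T : S → A → PMF S) (R : S → A → ℝ) (γ : ℝ)
    (π : S → PMF A) (V : S → ℝ) : S → ℝ :=
  fun s => ∑' a : A, (π s a).toReal * (R s a + γ * ∑' s' : S, (T s a s').toReal * V s')

/-- A real-valued function is bounded. -/
def IsBoundedFun {S : Type*} (f : S → ℝ) : Prop := ∃ M : ℝ, ∀ s, |f s| ≤ M

/-- The supremum norm over states. -/
noncomputable def supNorm {S : Type*} (f : S → ℝ) : ℝ := ⨆ s : S, |f s|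

/-- Total variation distance between two PMFs on a countable type. -/
noncomputable def tvDist {A : Type*} (p q : PMF A) : ℝ :=
  (1 / 2) * ∑' a : A, |(p a).toReal - (q a).toReal|

lemma summable_pmf_toReal {α : Type*} (p : PMF α) : Summable fun a => (p a).toReal :=
  ENNReal.summable_toReal p.tsum_coe_ne_top

lemma tsum_pmf_toReal {α : Type*} (p : PMF α) : ∑' a, (p a).toReal = 1 := by
  rw [← ENNReal.tsum_toReal_eq p.apply_ne_top, p.tsum_coe, ENNReal.toReal_one]

lemma summable_pmf_mul {α : Type*} (p : PMF α) {f : α → ℝ} {C : ℝ} (hf : ∀ a, |f a| ≤ C) :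
    Summable fun a => (p a).toReal * f a := by
  refine Summable.of_norm_bounded ((summable_pmf_toReal p).mul_right C) fun a => ?_
  rw [Real.norm_eq_abs, abs_mul, abs_of_nonneg ENNReal.toReal_nonneg]
  exact mul_le_mul_of_nonneg_left (hf a) ENNReal.toReal_nonneg

lemma abs_tsum_pmf_mul_le {α : Type*} (p : PMF α) {f : α → ℝ} {C : ℝ} (hf : ∀ a, |f a| ≤ C) :
    |∑' a, (p a).toReal * f a| ≤ C := by
  have hC : HasSum (fun a => (p a).toReal * C) C := by
    have h := (summable_pmf_toReal p).hasSum.mul_right C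
    rwa [tsum_pmf_toReal, one_mul] at h
  refine tsum_of_norm_bounded (f := fun a => (p a).toReal * f a) hC fun a => ?_
  rw [Real.norm_eq_abs, abs_mul, abs_of_nonneg ENNReal.toReal_nonneg]
  exact mul_le_mul_of_nonneg_left (hf a) ENNReal.toReal_nonneg

/-- Hölder's inequality for the `ℓ¹` difference of two distributions; the factor `2` undoes the
normalisation `1 / 2` in `tvDist`. -/
lemma abs_tsum_pmf_mul_sub_le {α : Type*} (p q : PMF α) {f : α → ℝ} {C : ℝ}
    (hf : ∀ a, |f a| ≤ C) :
    |∑' a, (p a).toReal * f a - ∑' a, (q a).toReal * f a| ≤ 2 * tvDist p q * C := by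
  rw [← (summable_pmf_mul p hf).tsum_sub (summable_pmf_mul q hf)]
  have hs : HasSum (fun a => |(p a).toReal - (q a).toReal| * C) (2 * tvDist p q * C) := by
    have h := ((summable_pmf_toReal p).sub (summable_pmf_toReal q)).abs.hasSum.mul_right C
    have e : 2 * tvDist p q = ∑' a, |(p a).toReal - (q a).toReal| := by
      unfold tvDist
      ring
    rwa [e]
  refine tsum_of_norm_bounded
    (f := fun a => (p a).toReal * f a - (q a).toReal * f a) hs fun a => ?_
  rw [Real.norm_eq_abs, ← sub_mul, abs_mul]
  exact mul_le_mul_of_nonneg_left (hf a) (abs_nonneg _)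

/-- Pointwise value gap inequality: under the performance degradation hypotheses
(`π_S` is `L_TV`-Lipschitz in total variation, `dist(Ψ(s), h(s)) ≤ ε`, `V₁, V₂` are the
bounded fixed points of `𝒯^{π_Ψ}` and `𝒯^{π_{S∘h}}`, and the action-values of `V₂` are
bounded by `Q_max`), for every target state `s`,
`|V₁(s) − V₂(s)| ≤ γ · ‖V₁ − V₂‖_∞ + 2 · L_TV · Q_max · ε`. -/
theorem pointwise_value_gap {ST A : Type*} [Countable ST] [Countable A]
    {SS : Type*} [MetricSpace SS]
    (TT : ST → A → PMF ST) (RT : ST → A → ℝ)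
    (γ : ℝ) (hγ0 : 0 < γ) (hγ1 : γ < 1)
    (hRT : ∃ M : ℝ, ∀ s a, |RT s a| ≤ M)
    (πS : SS → PMF A) (LTV : ℝ) (hLTV : 0 < LTV)
    (hLip : ∀ s₁ s₂ : SS, tvDist (πS s₁) (πS s₂) ≤ LTV * dist s₁ s₂)
    (h Ψ : ST → SS) (ε : ℝ) (hε : 0 ≤ ε)
    (hΨ : ∀ s : ST, dist (Ψ s) (h s) ≤ ε)
    (V₁ V₂ : ST → ℝ) (hV₁b : IsBoundedFun V₁) (hV₂b : IsBoundedFun V₂)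
    (hfix₁ : bellman TT RT γ (fun s => πS (Ψ s)) V₁ = V₁)
    (hfix₂ : bellman TT RT γ (fun s => πS (h s)) V₂ = V₂)
    (Qmax : ℝ) (hQmax : 0 ≤ Qmax)
    (hQ : ∀ (s : ST) (a : A),
      |RT s a + γ * ∑' s' : ST, (TT s a s').toReal * V₂ s'| ≤ Qmax) :
    ∀ s : ST,
      |V₁ s - V₂ s| ≤ γ * supNorm (fun t => V₁ t - V₂ t) + 2 * LTV * Qmax * ε := by
  intro s
  obtain ⟨M, hM⟩ := hRT
  obtain ⟨B₁, hB₁⟩ := hV₁b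
  obtain ⟨B₂, hB₂⟩ := hV₂b
  set Q₁ : ST → A → ℝ := fun s a => RT s a + γ * ∑' s' : ST, (TT s a s').toReal * V₁ s' with hQ₁
  set Q₂ : ST → A → ℝ := fun s a => RT s a + γ * ∑' s' : ST, (TT s a s').toReal * V₂ s' with hQ₂
  have hQ₁b : ∀ a, |Q₁ s a| ≤ M + γ * B₁ := fun a => by
    refine (abs_add_le _ _).trans (add_le_add (hM s a) ?_)
    rw [abs_mul, abs_of_pos hγ0]
    exact mul_le_mul_of_nonneg_left (abs_tsum_pmf_mul_le _ hB₁) hγ0.le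
  have hQ₂b : ∀ a, |Q₂ s a| ≤ Qmax := hQ s
  -- The real supremum dominates its terms only because `V₁ - V₂` is bounded.
  have hsup : ∀ t, |V₁ t - V₂ t| ≤ supNorm fun t => V₁ t - V₂ t := fun t =>
    le_ciSup (f := fun t => |V₁ t - V₂ t|)
      ⟨B₁ + B₂, by
        rintro _ ⟨u, rfl⟩
        exact (abs_sub _ _).trans (add_le_add (hB₁ u) (hB₂ u))⟩ t
  have hdiff : ∀ a, |Q₁ s a - Q₂ s a| ≤ γ * supNorm fun t => V₁ t - V₂ t := fun a => by
    have e : Q₁ s a - Q₂ s a = γ * ∑' s', (TT s a s').toReal * (V₁ s' - V₂ s') := by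
      simp only [hQ₁, hQ₂, mul_sub]
      rw [(summable_pmf_mul _ hB₁).tsum_sub (summable_pmf_mul _ hB₂)]
      ring
    rw [e, abs_mul, abs_of_pos hγ0]
    exact mul_le_mul_of_nonneg_left (abs_tsum_pmf_mul_le _ hsup) hγ0.le
  have h₁ : V₁ s = ∑' a, (πS (Ψ s) a).toReal * Q₁ s a := (congrFun hfix₁ s).symm
  have h₂ : V₂ s = ∑' a, (πS (h s) a).toReal * Q₂ s a := (congrFun hfix₂ s).symm
  have hsplit : V₁ s - V₂ s = ∑' a, (πS (Ψ s) a).toReal * (Q₁ s a - Q₂ s a) +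
      (∑' a, (πS (Ψ s) a).toReal * Q₂ s a - ∑' a, (πS (h s) a).toReal * Q₂ s a) := by
    simp only [mul_sub]
    rw [(summable_pmf_mul _ hQ₁b).tsum_sub (summable_pmf_mul _ hQ₂b), h₁, h₂]
    ring
  have htv : tvDist (πS (Ψ s)) (πS (h s)) ≤ LTV * ε :=
    (hLip _ _).trans (mul_le_mul_of_nonneg_left (hΨ s) hLTV.le)
  rw [hsplit]
  refine (abs_add_le _ _).trans (add_le_add (abs_tsum_pmf_mul_le _ hdiff) ?_)
  calc _ ≤ 2 * tvDist (πS (Ψ s)) (πS (h s)) * Qmax := abs_tsum_pmf_mul_sub_le _ _ hQ₂b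
    _ ≤ 2 * (LTV * ε) * Qmax := by gcongr
    _ = 2 * LTV * Qmax * ε := by ring
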